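/- Let 0 < δ < 1, let X = {0,1}^ℤ with the product (Bernoulli) measure μ = (δ, 1−δ)^{⊗ℤ}, and let T : X → X be the left shift. Then (X,μ,T) does not have the AOP property. -/

import Mathlib

open MeasureTheory Filter

/-- `(X,μ,T)` has asymptotically orthogonal powers (AOP). -/
def AOP {X : Type*} [MeasurableSpace X] (T : X → X) (μ : Measure X) : Prop :=
  ∀ f g : X → ℂ, MemLp f 2 μ → MemLp g 2 μ →
    (∫ x, f x ∂μ) = 0 → (∫ x, g x ∂μ) = 0 →
    ∀ ε > (0:ℝ), ∃ N : ℕ, ∀ r s : ℕ, r.Prime → s.Prime → r ≠ s → N ≤ r → N ≤ s →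
      ∀ κ : Measure (X × X), IsProbabilityMeasure κ →
        κ.map Prod.fst = μ → κ.map Prod.snd = μ →
        Ergodic (Prod.map (T^[r]) (T^[s])) κ →
        ‖∫ p, f p.1 * (starRingEnd ℂ) (g p.2) ∂κ‖ ≤ ε

/-!
The `r`-th power of the Bernoulli shift over `ν` is the Bernoulli shift over blocks of length `r`:
index the coordinate `i` by its residue and its quotient modulo `r`, so that `T^[r]` becomes
`(k, q) ↦ (k, q + 1)`. Let `y` be an i.i.d. field on `ℤ × ℤ` with law `ν`, and read `x` off `y` by
division by `r` and `x'` off the same `y` by division by `s`. Translating the field by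
`(k, q) ↦ (k, q + 1)` makes every cylinder independent of its late preimages, so it is ergodic; the
law of `(x, x')` is a factor of it, hence an ergodic joining of `T^[r]` and `T^[s]`. But
`x 0 = y (0, 0) = x' 0`, so a function of the coordinate `0` is perfectly correlated with itself
under all these joinings.
-/

open ProbabilityTheory

open scoped ENNReal ComplexConjugate symmDiff

section ErgodicityCriterion

variable {Ω : Type*} [MeasurableSpace Ω] {μ : Measure Ω} [IsProbabilityMeasure μ] {T : Ω → Ω}

lemma abs_measureReal_sub_sq_le_of_indepSet (hT : MeasurePreserving T μ μ) {A C : Set Ω}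
    (hA : MeasurableSet A) (hinv : T ⁻¹' A = A) (hC : MeasurableSet C)
    (hind : IndepSet C (T ⁻¹' C) μ) :
    |μ.real A - μ.real A ^ 2| ≤ 4 * μ.real (C ∆ A) := by
  have hTC : MeasurableSet (T ⁻¹' C) := hT.measurable hC
  have hCsq : μ.real (C ∩ T ⁻¹' C) = μ.real C ^ 2 := by
    rw [measureReal_def, (indepSet_iff_measure_inter_eq_mul hC hTC μ).1 hind, ENNReal.toReal_mul,
      hT.measure_preimage hC.nullMeasurableSet, ← measureReal_def, sq]
  have hpre : μ.real ((T ⁻¹' C) ∆ A) = μ.real (C ∆ A) := by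
    rw [← hT.measureReal_preimage (hC.symmDiff hA).nullMeasurableSet, Set.preimage_symmDiff, hinv]
  have hinter : μ.real ((C ∩ T ⁻¹' C) ∆ A) ≤ 2 * μ.real (C ∆ A) :=
    calc μ.real ((C ∩ T ⁻¹' C) ∆ A)
        ≤ μ.real (C ∆ A ∪ (T ⁻¹' C) ∆ A) := measureReal_mono fun x => by
          simp only [Set.mem_symmDiff, Set.mem_inter_iff, Set.mem_union]; tauto
      _ ≤ μ.real (C ∆ A) + μ.real ((T ⁻¹' C) ∆ A) := measureReal_union_le _ _
      _ = 2 * μ.real (C ∆ A) := by rw [hpre, two_mul]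
  have hdist : |μ.real C ^ 2 - μ.real A| ≤ 2 * μ.real (C ∆ A) := by
    rw [← hCsq]
    exact (abs_measureReal_sub_le_measureReal_symmDiff (hC.inter hTC).nullMeasurableSet
      hA.nullMeasurableSet).trans hinter
  have hsq : |μ.real C ^ 2 - μ.real A ^ 2| ≤ 2 * μ.real (C ∆ A) := by
    rw [sq_sub_sq, abs_mul, abs_of_nonneg (by positivity)]
    gcongr
    · linarith [measureReal_le_one (μ := μ) (s := C), measureReal_le_one (μ := μ) (s := A)]
    · exact abs_measureReal_sub_le_measureReal_symmDiff hC.nullMeasurableSet hA.nullMeasurableSet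
  rw [abs_le] at *
  constructor <;> linarith

lemma ergodic_of_exists_indepSet_preimage_iterate (hT : MeasurePreserving T μ μ)
    {𝒞 : Set (Set Ω)} (h𝒞 : IsSetAlgebra 𝒞)
    (hgen : ‹MeasurableSpace Ω› = MeasurableSpace.generateFrom 𝒞)
    (hind : ∀ C ∈ 𝒞, ∃ n, IndepSet C (T^[n] ⁻¹' C) μ) :
    Ergodic T μ := by
  refine ⟨hT, ⟨fun A hA hinv => ?_⟩⟩
  have happrox : ∀ ε > 0, ∃ C ∈ 𝒞, μ.real (C ∆ A) < ε := by
    intro ε hε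
    obtain ⟨C, hC, hCA⟩ := exists_measure_symmDiff_lt_of_generateFrom_isSetRing h𝒞.isSetRing
      (μ := μ) ⟨{Set.univ}, Set.countable_singleton _, by simpa using h𝒞.univ_mem, by simp⟩ hgen hA
      (ENNReal.ofReal_pos.2 hε)
    exact ⟨C, hC, (ENNReal.lt_ofReal_iff_toReal_lt (measure_ne_top μ _)).1 hCA⟩
  have hsq : μ.real A = μ.real A ^ 2 := by
    refine eq_of_forall_dist_le fun ε hε => ?_
    obtain ⟨C, hC, hCA⟩ := happrox (ε / 4) (by positivity)
    obtain ⟨n, hn⟩ := hind C hC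
    have hCm : MeasurableSet C := hgen ▸ MeasurableSpace.measurableSet_generateFrom hC
    have hAn : T^[n] ⁻¹' A = A := by
      rw [Set.preimage_iterate_eq]; exact Function.iterate_fixed hinv n
    rw [Real.dist_eq]
    linarith [abs_measureReal_sub_sq_le_of_indepSet (hT.iterate n) hA hAn hCm hn]
  have h01 : μ.real A = 0 ∨ μ.real A = 1 :=
    IsIdempotentElem.iff_eq_zero_or_one.1 ((sq _).symm.trans hsq.symm)
  rw [eventuallyConst_set', ae_eq_empty, ae_eq_univ, prob_compl_eq_zero_iff hA]
  exact h01.imp (measureReal_eq_zero_iff (measure_ne_top μ A)).1 (ENNReal.toReal_eq_one_iff _).1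

end ErgodicityCriterion

section Iterate

variable {ι : Type*}

lemma iterate_comp_right {α : Type*} (e : ι → ι) (n : ℕ) :
    (fun x : ι → α => x ∘ e)^[n] = fun x => x ∘ e^[n] := by
  induction n with
  | zero => rfl
  | succ n ih => rw [Function.iterate_succ, ih, Function.iterate_succ']; rfl

lemma injective_iterate_apply {e : ι → ι} (he : e.Injective) (hper : Function.periodicPts e = ∅)
    (i : ι) : (fun n => e^[n] i).Injective := by
  refine Function.Injective.of_lt_imp_ne fun m n hmn heq => ?_
  have hmem : i ∈ Function.periodicPts e :=
    Function.mk_mem_periodicPts (Nat.sub_pos_of_lt hmn) (Function.iterate_cancel he heq.symm)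
  simp [hper] at hmem

lemma exists_disjoint_image_iterate [DecidableEq ι] {e : ι → ι} (he : e.Injective)
    (hper : Function.periodicPts e = ∅) (s : Finset ι) :
    ∃ n, Disjoint s (s.image e^[n]) := by
  have hne : ∀ i ∈ s, ∀ j ∈ s, ∀ᶠ n in atTop, e^[n] j ≠ i := by
    intro i _ j _
    exact Nat.cofinite_eq_atTop ▸
      (injective_iterate_apply he hper j).tendsto_cofinite.eventually (eventually_cofinite_ne i)
  have hall : ∀ᶠ n in atTop, ∀ i ∈ s, ∀ j ∈ s, e^[n] j ≠ i := by
    simpa only [eventually_all_finset] using hne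
  obtain ⟨n, hn⟩ := hall.exists
  exact ⟨n, by simpa [Finset.disjoint_left] using hn⟩

end Iterate

section ProductMeasure

variable {ι κ α : Type*} [MeasurableSpace α]

lemma measurePreserving_comp_of_injective (ν : Measure α) [IsProbabilityMeasure ν] {e : κ → ι}
    (he : e.Injective) :
    MeasurePreserving (fun x : ι → α => x ∘ e) (Measure.infinitePi fun _ => ν)
      (Measure.infinitePi fun _ => ν) :=
  ⟨by fun_prop, Measure.map_infinitePi_infinitePi_of_inj he⟩

lemma integral_infinitePi_eval {E : Type*} [NormedAddCommGroup E] [NormedSpace ℝ E] (ν : Measure α)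
    [IsProbabilityMeasure ν] (i : ι) {f : α → E} (hf : AEStronglyMeasurable f ν) :
    ∫ x : ι → α, f (x i) ∂Measure.infinitePi (fun _ => ν) = ∫ a, f a ∂ν :=
  (measurePreserving_eval_infinitePi (fun _ => ν) i).hasLaw.integral_comp hf

lemma indepSet_cylinder_preimage_comp (ν : Measure α) [IsProbabilityMeasure ν] [DecidableEq ι]
    {e : ι → ι} {s : Finset ι} (hdisj : Disjoint s (s.image e)) {S : Set (s → α)}
    (hS : MeasurableSet S) :
    IndepSet (cylinder s S) ((fun x : ι → α => x ∘ e) ⁻¹' cylinder s S)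
      (Measure.infinitePi fun _ => ν) := by
  have hindep := (iIndepFun_infinitePi (P := fun _ : ι => ν) (X := fun _ => id)
    fun _ => measurable_id).indepFun_finset s (s.image e) hdisj fun i => by fun_prop
  have hread : Measurable fun (z : s.image e → α) (i : s) =>
      z ⟨e i, Finset.mem_image_of_mem e i.2⟩ := by fun_prop
  exact (indepFun_iff_indepSet_preimage (by fun_prop) (by fun_prop)).1
    (hindep.comp measurable_id hread) S S hS hS

theorem ergodic_comp_of_periodicPts_eq_empty (ν : Measure α) [IsProbabilityMeasure ν] {e : ι → ι}
    (he : e.Injective) (hper : Function.periodicPts e = ∅) :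
    Ergodic (fun x : ι → α => x ∘ e) (Measure.infinitePi fun _ => ν) := by
  classical
  refine ergodic_of_exists_indepSet_preimage_iterate (measurePreserving_comp_of_injective ν he)
    isSetAlgebra_measurableCylinders generateFrom_measurableCylinders.symm fun C hC => ?_
  obtain ⟨s, S, hS, rfl⟩ := (mem_measurableCylinders C).1 hC
  obtain ⟨n, hn⟩ := exists_disjoint_image_iterate he hper s
  exact ⟨n, iterate_comp_right (α := α) e n ▸ indepSet_cylinder_preimage_comp ν hn hS⟩

lemma eq_infinitePi_of_singleton {X : ι → Type*} [∀ i, MeasurableSpace (X i)]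
    [∀ i, Countable (X i)] [∀ i, MeasurableSingletonClass (X i)] (ν : ∀ i, Measure (X i))
    [∀ i, IsProbabilityMeasure (ν i)] {μ : Measure (∀ i, X i)}
    (hμ : ∀ (s : Finset ι) (a : ∀ i, X i), μ {x | ∀ i ∈ s, x i = a i} = ∏ i ∈ s, ν i {a i}) :
    μ = Measure.infinitePi ν := by
  classical
  have hlim : IsProjectiveLimit μ fun I => Measure.pi fun i : I => ν i := by
    intro I
    refine Measure.ext_of_singleton fun b => ?_
    have : ∀ i, Nonempty (X i) := fun i => nonempty_of_isProbabilityMeasure (ν i)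
    obtain ⟨a, rfl⟩ : ∃ a, I.restrict a = b :=
      Subtype.surjective_restrict (fun i => i ∈ I) b
    have hpre : I.restrict ⁻¹' {I.restrict a} = {x : ∀ i, X i | ∀ i ∈ I, x i = a i} := by
      ext x; simp [funext_iff]
    rw [Measure.map_apply (by fun_prop) (measurableSet_singleton _), hpre, hμ, Measure.pi_singleton]
    exact (I.prod_coe_sort fun i => ν i {a i}).symm
  exact hlim.unique (Measure.isProjectiveLimit_infinitePi ν)

lemma exists_eq_infinitePi_of_singleton [Nonempty ι] [Countable α] [MeasurableSingletonClass α]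
    (p : α → ℝ≥0∞) {μ : Measure (ι → α)} [IsProbabilityMeasure μ]
    (hμ : ∀ (s : Finset ι) (a : ι → α), μ {x | ∀ i ∈ s, x i = a i} = ∏ i ∈ s, p (a i)) :
    ∃ (ν : Measure α) (_ : IsProbabilityMeasure ν),
      (∀ c, ν {c} = p c) ∧ μ = Measure.infinitePi fun _ => ν := by
  obtain ⟨i₀⟩ := ‹Nonempty ι›
  have hν : ∀ c, μ.map (Function.eval i₀) {c} = p c := fun c => by
    rw [Measure.map_apply (measurable_pi_apply i₀) (measurableSet_singleton c)]
    simpa [Set.preimage] using hμ {i₀} fun _ => c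
  have hprob : IsProbabilityMeasure (μ.map (Function.eval i₀)) :=
    Measure.isProbabilityMeasure_map (measurable_pi_apply i₀).aemeasurable
  exact ⟨_, hprob, hν, eq_infinitePi_of_singleton _ (by simpa only [hν] using hμ)⟩

end ProductMeasure

section BlockIndex

/-- The block coordinates of `i`: its position in its block of length `r`, and the number of that
block. They turn translation by `r` on `ℤ` into `Prod.map id (· + 1)`. -/
def blockIndex (r : ℕ) (i : ℤ) : ℤ × ℤ := (i % r, i / r)

lemma blockIndex_zero (r : ℕ) : blockIndex r 0 = 0 := by simp [blockIndex]

lemma blockIndex_injective (r : ℕ) : (blockIndex r).Injective := fun i j h => by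
  obtain ⟨hmod, hdiv⟩ := Prod.ext_iff.1 h
  rw [← Int.emod_add_mul_ediv i r, ← Int.emod_add_mul_ediv j r]
  exact congrArg₂ (· + (r : ℤ) * ·) hmod hdiv

lemma semiconj_blockIndex {r : ℕ} (hr : r ≠ 0) :
    Function.Semiconj (blockIndex r) (· + 1)^[r] (Prod.map id (· + 1)) := fun i => by
  have hr' : (r : ℤ) ≠ 0 := Nat.cast_ne_zero.2 hr
  simp [blockIndex, add_right_iterate, Int.add_ediv_of_dvd_right, Int.ediv_self hr']

lemma injective_prodMap_id_add_one (κ : Type*) :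
    (Prod.map id (· + 1) : κ × ℤ → κ × ℤ).Injective :=
  Function.injective_id.prodMap (add_left_injective 1)

lemma periodicPts_prodMap_id_add_one (κ : Type*) :
    Function.periodicPts (Prod.map id (· + 1) : κ × ℤ → κ × ℤ) = ∅ := by
  refine Set.eq_empty_of_forall_notMem ?_
  rintro ⟨k, q⟩ ⟨n, hn, hper⟩
  have hq : q + n = q := by
    simpa [Function.IsPeriodicPt, Function.IsFixedPt, Prod.map_iterate, add_right_iterate]
      using congrArg Prod.snd hper
  omega

end BlockIndex

section BlockJoining

variable {α : Type*} [MeasurableSpace α] (ν : Measure α) {r s : ℕ}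

/-- The joining of the powers `T^[r]` and `T^[s]` of the Bernoulli shift over `ν` in which both
sequences are read, blockwise, off one i.i.d. field on `ℤ × ℤ`. -/
noncomputable def blockJoining [IsProbabilityMeasure ν] (r s : ℕ) : Measure ((ℤ → α) × (ℤ → α)) :=
  (Measure.infinitePi fun _ : ℤ × ℤ => ν).map fun y => (y ∘ blockIndex r, y ∘ blockIndex s)

variable [IsProbabilityMeasure ν]

instance isProbabilityMeasure_blockJoining : IsProbabilityMeasure (blockJoining ν r s) :=
  Measure.isProbabilityMeasure_map (by fun_prop)

lemma measurePreserving_fst_blockJoining :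
    MeasurePreserving Prod.fst (blockJoining ν r s) (Measure.infinitePi fun _ => ν) := by
  refine ⟨measurable_fst, ?_⟩
  rw [blockJoining, Measure.map_map measurable_fst (by fun_prop)]
  exact (measurePreserving_comp_of_injective ν (blockIndex_injective r)).map_eq

lemma measurePreserving_snd_blockJoining :
    MeasurePreserving Prod.snd (blockJoining ν r s) (Measure.infinitePi fun _ => ν) := by
  refine ⟨measurable_snd, ?_⟩
  rw [blockJoining, Measure.map_map measurable_snd (by fun_prop)]
  exact (measurePreserving_comp_of_injective ν (blockIndex_injective s)).map_eq

theorem ergodic_blockJoining (hr : r ≠ 0) (hs : s ≠ 0) :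
    Ergodic (Prod.map (fun (x : ℤ → α) i => x (i + 1))^[r] (fun (x : ℤ → α) i => x (i + 1))^[s])
      (blockJoining ν r s) := by
  have hfield := ergodic_comp_of_periodicPts_eq_empty ν (injective_prodMap_id_add_one ℤ)
    (periodicPts_prodMap_id_add_one ℤ)
  have hshift : ∀ n, (fun (x : ℤ → α) i => x (i + 1))^[n] = fun x => x ∘ (· + 1)^[n] :=
    iterate_comp_right (· + 1)
  have hread : MeasurePreserving (fun y : ℤ × ℤ → α => (y ∘ blockIndex r, y ∘ blockIndex s))
      (Measure.infinitePi fun _ => ν) (blockJoining ν r s) :=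
    Measurable.measurePreserving (by fun_prop) _
  refine hread.ergodic_of_ergodic_semiconj hfield ?_ fun y => ?_
  · rw [hshift, hshift]; fun_prop
  · simp only [hshift, Prod.map_apply, Function.comp_assoc, (semiconj_blockIndex hr).comp_eq,
      (semiconj_blockIndex hs).comp_eq]

lemma integral_blockJoining_mul_conj {φ ψ : α → ℂ} (hφ : AEStronglyMeasurable φ ν)
    (hψ : AEStronglyMeasurable ψ ν) :
    ∫ p, φ (p.1 0) * conj (ψ (p.2 0)) ∂blockJoining ν r s = ∫ a, φ a * conj (ψ a) ∂ν := by
  have heval := measurePreserving_eval_infinitePi (fun _ : ℤ => ν) 0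
  have hφ₀ : AEStronglyMeasurable (fun p : (ℤ → α) × (ℤ → α) => φ (p.1 0)) (blockJoining ν r s) :=
    hφ.comp_measurePreserving (heval.comp (measurePreserving_fst_blockJoining ν))
  have hψ₀ : AEStronglyMeasurable (fun p : (ℤ → α) × (ℤ → α) => ψ (p.2 0)) (blockJoining ν r s) :=
    hψ.comp_measurePreserving (heval.comp (measurePreserving_snd_blockJoining ν))
  calc ∫ p, φ (p.1 0) * conj (ψ (p.2 0)) ∂blockJoining ν r s
      = ∫ y, φ (y (blockIndex r 0)) * conj (ψ (y (blockIndex s 0)))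
          ∂Measure.infinitePi fun _ : ℤ × ℤ => ν :=
        integral_map (by fun_prop) (hφ₀.mul (Complex.continuous_conj.comp_aestronglyMeasurable hψ₀))
    _ = ∫ a, φ a * conj (ψ a) ∂ν := by
        rw [blockIndex_zero, blockIndex_zero]
        exact integral_infinitePi_eval ν 0
          (hφ.mul (Complex.continuous_conj.comp_aestronglyMeasurable hψ))

end BlockJoining

section NotAOP

variable {α : Type*} [MeasurableSpace α] (ν : Measure α) [IsProbabilityMeasure ν]

lemma ae_eq_zero_of_AOP
    (hAOP : AOP (fun (x : ℤ → α) i => x (i + 1)) (Measure.infinitePi fun _ => ν))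
    {φ : α → ℂ} (hφ : MemLp φ 2 ν) (hmean : ∫ a, φ a ∂ν = 0) : φ =ᵐ[ν] 0 := by
  have hφ₀ : MemLp (fun x : ℤ → α => φ (x 0)) 2 (Measure.infinitePi fun _ => ν) :=
    hφ.comp_measurePreserving (measurePreserving_eval_infinitePi (fun _ => ν) 0)
  have hmean₀ : ∫ x : ℤ → α, φ (x 0) ∂Measure.infinitePi (fun _ => ν) = 0 :=
    (integral_infinitePi_eval ν 0 hφ.aestronglyMeasurable).trans hmean
  have hsmall : ∀ ε > 0, ‖∫ a, φ a * conj (φ a) ∂ν‖ ≤ ε := by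
    intro ε hε
    obtain ⟨N, hN⟩ := hAOP _ _ hφ₀ hφ₀ hmean₀ hmean₀ ε hε
    obtain ⟨r, hNr, hr⟩ := Nat.exists_infinite_primes N
    obtain ⟨s, hrs, hs⟩ := Nat.exists_infinite_primes (r + 1)
    have hcorr := hN r s hr hs (by omega) hNr (by omega) (blockJoining ν r s) inferInstance
      (measurePreserving_fst_blockJoining ν).map_eq (measurePreserving_snd_blockJoining ν).map_eq
      (ergodic_blockJoining ν hr.ne_zero hs.ne_zero)
    rwa [integral_blockJoining_mul_conj ν hφ.aestronglyMeasurable hφ.aestronglyMeasurable] at hcorr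
  have hsq : ∫ a, ‖φ a‖ ^ 2 ∂ν = 0 := by
    have hzero := norm_le_zero_iff.1 (le_of_forall_gt_imp_ge_of_dense hsmall)
    simp only [Complex.mul_conj'] at hzero
    exact_mod_cast hzero
  have hintegrable := (memLp_two_iff_integrable_sq_norm hφ.aestronglyMeasurable).1 hφ
  filter_upwards [(integral_eq_zero_iff_of_nonneg (fun a => by positivity) hintegrable).1 hsq]
    with a ha
  simpa using ha

theorem bernoulli_shift_not_AOP_general {A : Set α} (hA : MeasurableSet A) (h0 : ν A ≠ 0)
    (h1 : ν A ≠ 1) : ¬ AOP (fun (x : ℤ → α) i => x (i + 1)) (Measure.infinitePi fun _ => ν) := by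
  intro hAOP
  have hintegrable : Integrable (A.indicator fun _ => (1 : ℂ)) ν :=
    (integrable_const 1).indicator hA
  have hφ : MemLp (fun a => A.indicator (fun _ => (1 : ℂ)) a - ν.real A) 2 ν :=
    (memLp_indicator_const 2 hA 1 (.inr (measure_ne_top ν A))).sub (memLp_const _)
  have hmean : ∫ a, (A.indicator (fun _ => (1 : ℂ)) a - ν.real A) ∂ν = 0 := by
    rw [integral_sub hintegrable (integrable_const _), integral_indicator_const _ hA]
    simp
  obtain ⟨a, haA, ha⟩ := ((frequently_ae_mem_iff.2 h0).and_eventually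
    (ae_eq_zero_of_AOP ν hAOP hφ hmean)).exists
  rw [Set.indicator_of_mem haA, Pi.zero_apply, sub_eq_zero] at ha
  exact h1 ((ENNReal.toReal_eq_one_iff _).1 (by exact_mod_cast ha.symm))

end NotAOP

/-- **Proposition 5.2 (special case).** The two-sided Bernoulli shift on `{0,1}^ℤ` with
product measure `(δ, 1−δ)^⊗ℤ`, `0 < δ < 1`, does not have the AOP property. -/
theorem bernoulli_shift_not_AOP
    (δ : ℝ) (hδ0 : 0 < δ) (hδ1 : δ < 1)
    (μ : Measure (ℤ → Fin 2)) [IsProbabilityMeasure μ]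
    (hμ : ∀ (s : Finset ℤ) (a : ℤ → Fin 2),
      μ {x : ℤ → Fin 2 | ∀ i ∈ s, x i = a i} =
        ∏ i ∈ s, (if a i = 0 then ENNReal.ofReal δ else ENNReal.ofReal (1 - δ)))
    (T : (ℤ → Fin 2) → (ℤ → Fin 2)) (hT : T = fun x => fun i => x (i + 1)) :
    ¬ AOP T μ := by
  obtain ⟨ν, _, hν, rfl⟩ := exists_eq_infinitePi_of_singleton
    (fun c : Fin 2 => if c = 0 then ENNReal.ofReal δ else ENNReal.ofReal (1 - δ)) hμ
  exact hT ▸ bernoulli_shift_not_AOP_general ν (measurableSet_singleton 0) (by simp [hν, hδ0])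
    (by simp [hν, hδ1.ne])
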